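/- arXiv:1902.06763 — 3 statements merged into one kernel-verified Lean document; each statement's English description precedes it below -/
import Mathlib

section
/- Let n ≥ 1, let α = (α_1,…,α_n) be real numbers with α_i > 0 for all i, let t = (t_1,…,t_n) be real numbers with t_i ≥ 0 for all i, and let s = (s_1,…,s_n) ∈ ℂ^n with Re(s_i) > 1 for all i. Then the multiple series ζ_{n,t}(α; s) = Σ_{m = (m_1,…,m_n) ∈ ℕ^n} ∏_{i=1}^n ( (m_1+t_1) + ⋯ + (m_i+t_i) + α_i )^{−s_i} converges absolutely (its family of terms is summable). In particular, for t = 0 the generalized multiple Hurwitz zeta series ζ_n(α; s) = Σ_{m ∈ ℕ^n} ∏_{i=1}^n (m_1+⋯+m_i+α_i)^{−s_i} converges absolutely. -/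
/-!
Absorb the shift `t` into complex parameters `a i` of positive real part, and write
`σ i = (s i).re`. By `‖z ^ (-s)‖ ≤ exp (π * |s.im|) * z.re ^ (-s.re)`, the general term is at most
a constant times `∏ i, ((∑ j ∈ Finset.Iic i, m j) + (a i).re) ^ (-σ i)`. Each factor is antitone in
its partial sum, which is at least `m i`, so this product is at most
`∏ i, (m i + (a i).re) ^ (-σ i)`, which separates into convergent one-variable series.
-/

open Finset

section ProductFamilies

variable {ι : Type*} [Fintype ι] {κ : ι → Type*}

theorem summable_pi_prod_of_nonneg {f : ∀ i, κ i → ℝ} (hf₀ : ∀ i k, 0 ≤ f i k)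
    (hf : ∀ i, Summable (f i)) : Summable fun m : ∀ i, κ i => ∏ i, f i (m i) := by
  classical
  refine summable_of_sum_le (c := ∏ i, ∑' k, f i k)
    (fun m => prod_nonneg fun i _ => hf₀ i (m i)) fun u => ?_
  -- A finite set of indices lies in the product of its coordinate projections, over which the
  -- sum factors.
  let box : Finset (∀ i, κ i) := Fintype.piFinset fun i => u.image fun m => m i
  have subset_box : u ⊆ box := fun m hm =>
    Fintype.mem_piFinset.2 fun i => mem_image_of_mem (fun m => m i) hm
  calc ∑ m ∈ u, ∏ i, f i (m i)
      ≤ ∑ m ∈ box, ∏ i, f i (m i) :=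
        sum_le_sum_of_subset_of_nonneg subset_box fun m _ _ => prod_nonneg fun i _ => hf₀ i (m i)
    _ = ∏ i, ∑ k ∈ u.image fun m => m i, f i k := (prod_univ_sum _ _).symm
    _ ≤ ∏ i, ∑' k, f i k :=
        prod_le_prod (fun i _ => sum_nonneg fun k _ => hf₀ i k) fun i _ =>
          (hf i).sum_le_tsum _ fun k _ => hf₀ i k

theorem summable_pi_prod_comp_of_norm_le_antitone {R : Type*} [NormedCommRing R] [NormOneClass R]
    [CompleteSpace R] [∀ i, Preorder (κ i)] {f : ∀ i, κ i → R} {g : ∀ i, κ i → ℝ}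
    (hfg : ∀ i k, ‖f i k‖ ≤ g i k) (hg_anti : ∀ i, Antitone (g i)) (hg : ∀ i, Summable (g i))
    {N : (∀ i, κ i) → ∀ i, κ i} (hN : ∀ m, m ≤ N m) :
    Summable fun m : ∀ i, κ i => ∏ i, f i (N m i) := by
  have hg₀ : ∀ i k, 0 ≤ g i k := fun i k => (norm_nonneg _).trans (hfg i k)
  refine (summable_pi_prod_of_nonneg hg₀ hg).of_norm_bounded fun m => ?_
  calc ‖∏ i, f i (N m i)‖
      ≤ ∏ i, ‖f i (N m i)‖ := norm_prod_le _ _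
    _ ≤ ∏ i, g i (m i) :=
        prod_le_prod (fun i _ => norm_nonneg _) fun i _ =>
          (hfg i (N m i)).trans (hg_anti i (hN m i))

end ProductFamilies

theorem norm_cpow_neg_le_of_re_pos {z s : ℂ} (hz : 0 < z.re) (hs : 0 ≤ s.re) :
    ‖z ^ (-s)‖ ≤ Real.exp (Real.pi * |s.im|) * z.re ^ (-s.re) := by
  have arg_mul_im_le : z.arg * s.im ≤ Real.pi * |s.im| :=
    calc z.arg * s.im ≤ |z.arg| * |s.im| := (le_abs_self _).trans (abs_mul _ _).le
      _ ≤ Real.pi * |s.im| := by gcongr; exact z.abs_arg_le_pi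
  calc ‖z ^ (-s)‖
      ≤ ‖z‖ ^ (-s).re / Real.exp (z.arg * (-s).im) := Complex.norm_cpow_le z (-s)
    _ = Real.exp (z.arg * s.im) * ‖z‖ ^ (-s.re) := by
        rw [Complex.neg_re, Complex.neg_im, mul_neg, Real.exp_neg, div_inv_eq_mul, mul_comm]
    _ ≤ Real.exp (Real.pi * |s.im|) * z.re ^ (-s.re) := by
        have rpow_le : ‖z‖ ^ (-s.re) ≤ z.re ^ (-s.re) :=
          Real.rpow_le_rpow_of_nonpos hz z.re_le_norm (neg_nonpos.2 hs)
        gcongr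

theorem antitone_natCast_add_rpow_neg {a σ : ℝ} (ha : 0 < a) (hσ : 0 ≤ σ) :
    Antitone fun k : ℕ => ((k : ℝ) + a) ^ (-σ) := fun k l hkl =>
  Real.rpow_le_rpow_of_nonpos (by positivity) (by gcongr) (neg_nonpos.2 hσ)

theorem summable_natCast_add_rpow_neg {a σ : ℝ} (ha : 0 < a) (hσ : 1 < σ) :
    Summable fun k : ℕ => ((k : ℝ) + a) ^ (-σ) := by
  refine ((Real.summable_one_div_nat_add_rpow a σ).2 hσ).congr fun k => ?_
  have hka : 0 < (k : ℝ) + a := by positivity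
  rw [abs_of_pos hka, Real.rpow_neg hka.le, one_div]

theorem generalized_multiple_hurwitz_zeta_summable_general {ι : Type*} [Fintype ι] [Preorder ι]
    [LocallyFiniteOrderBot ι] {a s : ι → ℂ} (ha : ∀ i, 0 < (a i).re) (hs : ∀ i, 1 < (s i).re) :
    Summable fun m : ι → ℕ => ∏ i, ((∑ j ∈ Iic i, (m j : ℂ)) + a i) ^ (-(s i)) := by
  have hs₀ : ∀ i, 0 ≤ (s i).re := fun i => zero_le_one.trans (hs i).le
  have factor_le (i : ι) (k : ℕ) : ‖((k : ℂ) + a i) ^ (-(s i))‖ ≤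
      Real.exp (Real.pi * |(s i).im|) * ((k : ℝ) + (a i).re) ^ (-(s i).re) := by
    have re_pos : 0 < ((k : ℂ) + a i).re := by
      simpa using add_pos_of_nonneg_of_pos k.cast_nonneg (ha i)
    simpa using norm_cpow_neg_le_of_re_pos re_pos (hs₀ i)
  have le_partialSum (m : ι → ℕ) : m ≤ fun i => ∑ j ∈ Iic i, m j := fun i =>
    single_le_sum_of_canonicallyOrdered (mem_Iic.2 le_rfl)
  simpa using summable_pi_prod_comp_of_norm_le_antitone factor_le
    (fun i => (antitone_natCast_add_rpow_neg (ha i) (hs₀ i)).const_mul (Real.exp_nonneg _))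
    (fun i => (summable_natCast_add_rpow_neg (ha i) (hs i)).mul_left _) le_partialSum

/-- Absolute convergence (summability) of the shifted generalized multiple Hurwitz
zeta series `ζ_{n,t}(α; s) = Σ_{m ∈ ℕ^n} ∏_i ((m_1+t_1)+⋯+(m_i+t_i)+α_i)^{-s_i}`
when every `Re (s i) > 1`; the case `t = 0` is the generalized multiple Hurwitz
zeta function itself. -/
theorem generalized_multiple_hurwitz_zeta_summable
    (n : ℕ) (hn : 1 ≤ n) (α t : Fin n → ℝ)
    (hα : ∀ i, 0 < α i) (ht : ∀ i, 0 ≤ t i)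
    (s : Fin n → ℂ) (hs : ∀ i, 1 < (s i).re) :
    Summable (fun m : Fin n → ℕ =>
      ∏ i : Fin n,
        (((∑ j ∈ Finset.Iic i, ((m j : ℝ) + t j)) + α i : ℝ) : ℂ) ^ (-(s i))) := by
  simpa [sum_add_distrib, add_assoc] using generalized_multiple_hurwitz_zeta_summable_general
    (a := fun i => ((∑ j ∈ Iic i, t j + α i : ℝ) : ℂ))
    (fun i => add_pos_of_nonneg_of_pos (sum_nonneg fun j _ => ht j) (hα i)) hs
end

section
/- Let n ≥ 1, let α = (α_1,…,α_n) be real numbers with α_i > 0 for all i, and let s = (s_1,…,s_n) ∈ ℂ^n satisfy Re(s_j + s_{j+1} + ⋯ + s_n) > n − j + 1 for every 1 ≤ j ≤ n (in particular Re(s_n) > 1). Then the function x = (x_1,…,x_n) ↦ ∏_{i=1}^n (x_1 + ⋯ + x_i + α_i)^{−s_i} is Lebesgue integrable on [0,∞)^n, so that the integral Y_n(α; s) = ∫_{[0,∞)^n} ∏_{i=1}^n (x_1+⋯+x_i+α_i)^{−s_i} dx is well defined. -/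
/-! Bound the absolute value of the integrand by a constant times `∏ i, (1 + x i) ^ (-r)` with
`r > 1`, which is integrable as a product of one-variable functions. Only the exponents stand in the
way: `re (s i)` may be less than `r`, but the sum of `re (s i) - r` over any upper set of indices is
nonnegative when `r` is close to `1`. The partial sums `1 + ∑ j ≤ i, x j` increase with `i`, so the
superlevel sets of their logarithms are such upper sets, and the layer-cake formula shows that
replacing every exponent by `r` can only increase the product. -/

open Finset MeasureTheory Filter Topology

theorem sum_mul_nonneg_of_superlevel {ι : Type*} {s : Finset ι} {a f : ι → ℝ}
    (hf : ∀ i ∈ s, 0 ≤ f i) (ha : ∀ t, 0 ≤ t → 0 ≤ ∑ i ∈ s with t < f i, a i) :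
    0 ≤ ∑ i ∈ s, a i * f i := by
  have integrable_layer (i : ι) :
      Integrable ((Set.Ico 0 (f i)).indicator fun _ => a i) :=
    (integrable_indicator_iff measurableSet_Ico).2 (by simp)
  have layer_cake : ∑ i ∈ s, a i * f i =
      ∫ t, ∑ i ∈ s, (Set.Ico 0 (f i)).indicator (fun _ => a i) t := by
    rw [integral_finsetSum s fun i _ => integrable_layer i]
    refine sum_congr rfl fun i hi => ?_
    rw [integral_indicator_const _ measurableSet_Ico, Real.volume_real_Ico_of_le (hf i hi),
      sub_zero, smul_eq_mul, mul_comm]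
  rw [layer_cake]
  refine integral_nonneg fun t => ?_
  rw [Pi.zero_apply]
  by_cases ht : 0 ≤ t
  · simpa only [Set.indicator_apply, Set.mem_Ico, ht, true_and, sum_filter] using ha t ht
  · simp [ht]

theorem one_le_prod_rpow_of_monotone {ι : Type*} [Fintype ι] [Preorder ι] {y a : ι → ℝ}
    (hy : ∀ i, 1 ≤ y i) (hmono : Monotone y)
    (ha : ∀ U : Finset ι, IsUpperSet (U : Set ι) → 0 ≤ ∑ i ∈ U, a i) :
    1 ≤ ∏ i, y i ^ a i := by
  have hpos (i : ι) : 0 < y i := one_pos.trans_le (hy i)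
  have log_mono : Monotone fun i => Real.log (y i) :=
    fun i _ hij => Real.log_le_log (hpos i) (hmono hij)
  have log_prod_nonneg : 0 ≤ ∑ i, a i * Real.log (y i) := by
    refine sum_mul_nonneg_of_superlevel (fun i _ => Real.log_nonneg (hy i)) fun t _ => ha _ ?_
    rw [coe_filter_univ]
    exact (isUpperSet_Ioi t).preimage log_mono
  calc 1 ≤ Real.exp (∑ i, a i * Real.log (y i)) := Real.one_le_exp log_prod_nonneg
    _ = ∏ i, y i ^ a i := by simp only [Real.exp_sum, Real.rpow_def_of_pos (hpos _), mul_comm]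

theorem prod_rpow_neg_le_of_monotone {ι : Type*} [Fintype ι] [Preorder ι] {y a b : ι → ℝ}
    (hy : ∀ i, 1 ≤ y i) (hmono : Monotone y)
    (hab : ∀ U : Finset ι, IsUpperSet (U : Set ι) → ∑ i ∈ U, b i ≤ ∑ i ∈ U, a i) :
    ∏ i, y i ^ (-a i) ≤ ∏ i, y i ^ (-b i) := by
  have hpos (i : ι) : 0 < y i := one_pos.trans_le (hy i)
  have one_le_prod : 1 ≤ ∏ i, y i ^ (a i - b i) :=
    one_le_prod_rpow_of_monotone hy hmono fun U hU => by
      simpa only [sum_sub_distrib, sub_nonneg] using hab U hU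
  calc ∏ i, y i ^ (-a i) ≤ (∏ i, y i ^ (-a i)) * ∏ i, y i ^ (a i - b i) :=
        le_mul_of_one_le_right (prod_nonneg fun i _ => Real.rpow_nonneg (hpos i).le _) one_le_prod
    _ = ∏ i, y i ^ (-b i) := by
        simp only [← prod_mul_distrib, ← Real.rpow_add (hpos _), neg_add_eq_sub,
          sub_sub_cancel_left]

theorem prod_sum_Iic_add_one_rpow_neg_le {ι : Type*} [Fintype ι] [Preorder ι]
    [LocallyFiniteOrderBot ι] {a x : ι → ℝ} {r : ℝ} (hr : 0 ≤ r) (hx : ∀ i, 0 ≤ x i)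
    (ha : ∀ U : Finset ι, IsUpperSet (U : Set ι) → #U * r ≤ ∑ i ∈ U, a i) :
    ∏ i, (∑ j ∈ Iic i, x j + 1) ^ (-a i) ≤ ∏ i, (1 + x i) ^ (-r) := by
  have partial_sum_nonneg (i : ι) : 0 ≤ ∑ j ∈ Iic i, x j := sum_nonneg fun j _ => hx j
  have le_sum (i : ι) : x i ≤ ∑ j ∈ Iic i, x j :=
    single_le_sum (fun j _ => hx j) (mem_Iic.2 le_rfl)
  have sum_mono : Monotone fun i => ∑ j ∈ Iic i, x j := fun i k hik =>
    sum_le_sum_of_subset_of_nonneg (Iic_subset_Iic.2 hik) fun j _ _ => hx j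
  calc ∏ i, (∑ j ∈ Iic i, x j + 1) ^ (-a i)
      ≤ ∏ i, (∑ j ∈ Iic i, x j + 1) ^ (-r) :=
        prod_rpow_neg_le_of_monotone (fun i => le_add_of_nonneg_left (partial_sum_nonneg i))
          (sum_mono.add_const 1) fun U hU => by
            simpa only [sum_const, nsmul_eq_mul] using ha U hU
    _ ≤ ∏ i, (1 + x i) ^ (-r) := by
        refine prod_le_prod (fun i _ => Real.rpow_nonneg (by linarith [partial_sum_nonneg i]) _)
          fun i _ => Real.rpow_le_rpow_of_nonpos (by linarith [hx i]) ?_ (neg_nonpos.2 hr)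
        linarith [le_sum i]

theorem exists_add_rpow_le_mul_add_rpow {a b : ℝ} (ha : 0 < a) (hb : 0 < b) (t : ℝ) :
    ∃ C, 0 ≤ C ∧ ∀ x, 0 ≤ x → (x + a) ^ t ≤ C * (x + b) ^ t := by
  have hab : a / b * b = a := div_mul_cancel₀ a hb.ne'
  rcases le_total 0 t with ht | ht
  · refine ⟨max (a / b) 1 ^ t, by positivity, fun x hx => ?_⟩
    rw [← Real.mul_rpow (by positivity) (by positivity)]
    refine Real.rpow_le_rpow (by positivity) ?_ ht
    nlinarith [le_max_left (a / b) 1, le_max_right (a / b) 1]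
  · have hmin : 0 < min (a / b) 1 := lt_min (div_pos ha hb) one_pos
    refine ⟨min (a / b) 1 ^ t, by positivity, fun x hx => ?_⟩
    rw [← Real.mul_rpow hmin.le (by positivity)]
    refine Real.rpow_le_rpow_of_nonpos (by positivity) ?_ ht
    nlinarith [min_le_left (a / b) 1, min_le_right (a / b) 1]

theorem exists_one_lt_forall_mul_lt {κ : Type*} {K : Set κ} (hK : K.Finite) {c T : κ → ℝ}
    (h : ∀ k ∈ K, c k < T k) : ∃ r, 1 < r ∧ ∀ k ∈ K, c k * r < T k := by
  have eventually_lt : ∀ᶠ r in 𝓝[>] (1 : ℝ), ∀ k ∈ K, c k * r < T k := by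
    refine (eventually_all_finite hK).2 fun k hk => ?_
    have tendsto_mul : Tendsto (fun r => c k * r) (𝓝 1) (𝓝 (c k)) := by
      simpa only [mul_one] using (continuous_const_mul (c k)).tendsto 1
    exact (tendsto_mul.mono_left nhdsWithin_le_nhds).eventually_lt_const (h k hk)
  exact (eventually_mem_nhdsWithin.and eventually_lt).exists

theorem integrable_prod_one_add_norm_rpow {ι : Type*} [Fintype ι] {r : ℝ} (hr : 1 < r) :
    Integrable fun x : ι → ℝ => ∏ i, (1 + ‖x i‖) ^ (-r) :=
  Integrable.fintype_prod (f := fun (_ : ι) (y : ℝ) => (1 + ‖y‖) ^ (-r)) fun _ =>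
    integrable_one_add_norm (by simpa using hr)

theorem exists_norm_prod_cpow_neg_le {ι : Type*} [Fintype ι] [Preorder ι]
    [LocallyFiniteOrderBot ι] {α : ι → ℝ} (hα : ∀ i, 0 < α i) {s : ι → ℂ} {r : ℝ} (hr : 0 ≤ r)
    (hs : ∀ U : Finset ι, IsUpperSet (U : Set ι) → #U * r ≤ (∑ i ∈ U, s i).re) :
    ∃ C, ∀ x : ι → ℝ, (∀ i, 0 ≤ x i) →
      ‖∏ i, ((∑ j ∈ Iic i, x j + α i : ℝ) : ℂ) ^ (-s i)‖ ≤ C * ∏ i, (1 + ‖x i‖) ^ (-r) := by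
  choose C hC_nonneg hC using fun i =>
    exists_add_rpow_le_mul_add_rpow (hα i) one_pos (-(s i).re)
  refine ⟨∏ i, C i, fun x hx => ?_⟩
  have partial_sum_nonneg (i : ι) : 0 ≤ ∑ j ∈ Iic i, x j := sum_nonneg fun j _ => hx j
  have base_pos (i : ι) : 0 < ∑ j ∈ Iic i, x j + α i :=
    add_pos_of_nonneg_of_pos (partial_sum_nonneg i) (hα i)
  calc ‖∏ i, ((∑ j ∈ Iic i, x j + α i : ℝ) : ℂ) ^ (-s i)‖
      = ∏ i, (∑ j ∈ Iic i, x j + α i) ^ (-(s i).re) := by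
        simp only [norm_prod, Complex.norm_cpow_eq_rpow_re_of_pos (base_pos _), Complex.neg_re]
    _ ≤ ∏ i, C i * (∑ j ∈ Iic i, x j + 1) ^ (-(s i).re) :=
        prod_le_prod (fun i _ => Real.rpow_nonneg (base_pos i).le _)
          fun i _ => hC i _ (partial_sum_nonneg i)
    _ = (∏ i, C i) * ∏ i, (∑ j ∈ Iic i, x j + 1) ^ (-(s i).re) := prod_mul_distrib
    _ ≤ (∏ i, C i) * ∏ i, (1 + x i) ^ (-r) :=
        mul_le_mul_of_nonneg_left
          (prod_sum_Iic_add_one_rpow_neg_le hr hx fun U hU => by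
            simpa only [Complex.re_sum] using hs U hU)
          (prod_nonneg fun i _ => hC_nonneg i)
    _ = (∏ i, C i) * ∏ i, (1 + ‖x i‖) ^ (-r) := by simp only [Real.norm_of_nonneg (hx _)]

theorem exists_eq_Ici_of_isUpperSet {ι : Type*} [LinearOrder ι] [LocallyFiniteOrderTop ι]
    {U : Finset ι} (hne : U.Nonempty) (hU : IsUpperSet (U : Set ι)) : ∃ j, U = Ici j :=
  ⟨U.min' hne, ext fun i =>
    ⟨fun hi => mem_Ici.2 (U.min'_le i hi), fun hi => hU (mem_Ici.1 hi) (U.min'_mem hne)⟩⟩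

theorem integral_function_integrableOn_general {ι : Type*} [Fintype ι] [Preorder ι]
    [LocallyFiniteOrderBot ι] {α : ι → ℝ} (hα : ∀ i, 0 < α i) {s : ι → ℂ}
    (hs : ∀ U : Finset ι, U.Nonempty → IsUpperSet (U : Set ι) → #U < (∑ i ∈ U, s i).re) :
    IntegrableOn
      (fun x : ι → ℝ => ∏ i, ((∑ j ∈ Iic i, x j + α i : ℝ) : ℂ) ^ (-s i))
      (Set.univ.pi fun _ => Set.Ici 0) := by
  obtain ⟨r, hr, hsr⟩ := exists_one_lt_forall_mul_lt
    (Set.toFinite {U : Finset ι | U.Nonempty ∧ IsUpperSet (U : Set ι)})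
    fun U hU => hs U hU.1 hU.2
  obtain ⟨C, hC⟩ := exists_norm_prod_cpow_neg_le hα (s := s) (zero_le_one.trans hr.le)
    fun U hU => U.eq_empty_or_nonempty.elim (by rintro rfl; simp) fun hne => (hsr U ⟨hne, hU⟩).le
  refine ((integrable_prod_one_add_norm_rpow hr).const_mul C).integrableOn.mono' ?_ ?_
  · exact Measurable.aestronglyMeasurable
      (Finset.measurable_prod _ fun i _ => Measurable.pow_const (by fun_prop) _)
  · exact ae_restrict_of_forall_mem (MeasurableSet.univ_pi fun _ => measurableSet_Ici)
      fun x hx => hC x fun i => hx i (Set.mem_univ i)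

/-- Integrability of `x ↦ ∏_i (x_1+⋯+x_i+α_i)^{-s_i}` on `[0,∞)^n` when
`Re (s_j + ⋯ + s_n) > n - j + 1` for every `1 ≤ j ≤ n` (here `j : Fin n` is
the 0-based index, so the bound reads `n - j` in 0-based form). -/
theorem integral_function_integrableOn
    (n : ℕ) (hn : 1 ≤ n) (α : Fin n → ℝ) (hα : ∀ i, 0 < α i)
    (s : Fin n → ℂ)
    (hs : ∀ j : Fin n, (n : ℝ) - (j : ℕ) < (∑ i ∈ Finset.Ici j, s i).re) :
    MeasureTheory.IntegrableOn
      (fun x : Fin n → ℝ =>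
        ∏ i : Fin n, (((∑ j ∈ Finset.Iic i, x j) + α i : ℝ) : ℂ) ^ (-(s i)))
      (Set.univ.pi fun _ : Fin n => Set.Ici (0 : ℝ)) := by
  refine integral_function_integrableOn_general hα fun U hne hU => ?_
  obtain ⟨j, rfl⟩ := exists_eq_Ici_of_isUpperSet hne hU
  simpa [Nat.cast_sub j.2.le] using hs j
end

section
/- (Raabe's formula, convergent range.) Let n ≥ 1, let α = (α_1,…,α_n) be real numbers with α_i > 0 for all i, and let s = (s_1,…,s_n) ∈ ℂ^n with Re(s_i) > 1 for all i. Then ∫_{[0,1]^n} ζ_{n,t}(α; s) dt = Y_n(α; s), where ζ_{n,t}(α; s) = Σ_{m ∈ ℕ^n} ∏_{i=1}^n ( (m_1+t_1)+⋯+(m_i+t_i)+α_i )^{−s_i}, Y_n(α; s) = ∫_{[0,∞)^n} ∏_{i=1}^n (x_1+⋯+x_i+α_i)^{−s_i} dx, and dt is Lebesgue measure on [0,1]^n. In particular the function t ↦ ζ_{n,t}(α; s) is integrable on [0,1]^n. -/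
/-!
The unit cubes `m + [0, 1)^n`, `m ∈ ℕ^n`, tile the orthant `[0, ∞)^n`, so integrating
`∑_m f (m + t)` over the unit cube reassembles the integral of `f` over the orthant, for every
integrable `f`. The Hurwitz integrand is integrable because discarding all the summands but `x_i`
from the `i`-th linear form leaves the majorant `∏_i (x_i + α_i)^{-Re s_i}`, a product of
integrable functions of one variable.
-/

section Tiling

open MeasureTheory Set Function

variable {κ X Y E : Type*} [MeasurableSpace X] [MeasurableSpace Y] [NormedAddCommGroup E]
  {μ : Measure X} {ν : Measure Y}

theorem integrable_tsum_of_tsum_lintegral_enorm_ne_top [Countable κ] [CompleteSpace E]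
    {f : κ → X → E}
    (hf : ∀ k, AEStronglyMeasurable (f k) μ) (hfin : ∑' k, ∫⁻ x, ‖f k x‖ₑ ∂μ ≠ ⊤) :
    Integrable (fun x ↦ ∑' k, f k x) μ := by
  have hsummable : ∀ᵐ x ∂μ, Summable fun k ↦ ‖f k x‖ :=
    summable_norm_of_tsum_eLpNorm_ne_top le_rfl hf
      (by simpa only [eLpNorm_one_eq_lintegral_enorm] using hfin)
  constructor
  · refine aestronglyMeasurable_of_tendsto_ae Filter.atTop
      (fun t : Finset κ ↦ t.aestronglyMeasurable_fun_sum fun k _ ↦ hf k) ?_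
    filter_upwards [hsummable] with x hx using hx.of_norm.hasSum
  · calc ∫⁻ x, ‖∑' k, f k x‖ₑ ∂μ
      _ ≤ ∫⁻ x, ∑' k, ‖f k x‖ₑ ∂μ := lintegral_mono fun _ ↦ enorm_tsum_le_tsum_enorm
      _ = ∑' k, ∫⁻ x, ‖f k x‖ₑ ∂μ := lintegral_tsum fun k ↦ (hf k).enorm
      _ < ⊤ := hfin.lt_top

variable {φ : κ → X → Y} {s : Set X} {f : Y → E}

theorem aestronglyMeasurable_comp_of_integrableOn_iUnion_image
    (hφ : ∀ k, MeasurePreserving (φ k) μ ν) (hemb : ∀ k, MeasurableEmbedding (φ k))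
    (hf : IntegrableOn f (⋃ k, φ k '' s) ν) (k : κ) :
    AEStronglyMeasurable (fun x ↦ f (φ k x)) (μ.restrict s) :=
  (((hφ k).integrableOn_image (hemb k)).1 (hf.mono_set (subset_iUnion (φ · '' s) k))).1

variable [Countable κ]

theorem tsum_setLIntegral_comp_of_pairwise_disjoint_image (g : Y → ENNReal)
    (hφ : ∀ k, MeasurePreserving (φ k) μ ν) (hemb : ∀ k, MeasurableEmbedding (φ k))
    (hs : MeasurableSet s) (hdisj : Pairwise (Disjoint on fun k ↦ φ k '' s)) :
    ∑' k, ∫⁻ x in s, g (φ k x) ∂μ = ∫⁻ y in ⋃ k, φ k '' s, g y ∂ν := by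
  rw [lintegral_iUnion (fun k ↦ (hemb k).measurableSet_image.2 hs) hdisj]
  exact tsum_congr fun k ↦ (hφ k).setLIntegral_comp_emb (hemb k) g s

theorem integrableOn_tsum_comp_of_pairwise_disjoint_image [CompleteSpace E]
    (hφ : ∀ k, MeasurePreserving (φ k) μ ν) (hemb : ∀ k, MeasurableEmbedding (φ k))
    (hs : MeasurableSet s) (hdisj : Pairwise (Disjoint on fun k ↦ φ k '' s))
    (hf : IntegrableOn f (⋃ k, φ k '' s) ν) :
    IntegrableOn (fun x ↦ ∑' k, f (φ k x)) s μ :=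
  integrable_tsum_of_tsum_lintegral_enorm_ne_top
    (aestronglyMeasurable_comp_of_integrableOn_iUnion_image hφ hemb hf)
    ((tsum_setLIntegral_comp_of_pairwise_disjoint_image (‖f ·‖ₑ) hφ hemb hs hdisj).trans_ne
      hf.2.ne)

theorem setIntegral_tsum_comp_of_pairwise_disjoint_image [NormedSpace ℝ E]
    (hφ : ∀ k, MeasurePreserving (φ k) μ ν) (hemb : ∀ k, MeasurableEmbedding (φ k))
    (hs : MeasurableSet s) (hdisj : Pairwise (Disjoint on fun k ↦ φ k '' s))
    (hf : IntegrableOn f (⋃ k, φ k '' s) ν) :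
    ∫ x in s, ∑' k, f (φ k x) ∂μ = ∫ y in ⋃ k, φ k '' s, f y ∂ν :=
  calc ∫ x in s, ∑' k, f (φ k x) ∂μ
    _ = ∑' k, ∫ x in s, f (φ k x) ∂μ :=
      integral_tsum (aestronglyMeasurable_comp_of_integrableOn_iUnion_image hφ hemb hf)
        ((tsum_setLIntegral_comp_of_pairwise_disjoint_image (‖f ·‖ₑ) hφ hemb hs hdisj).trans_ne
          hf.2.ne)
    _ = ∑' k, ∫ y in φ k '' s, f y ∂ν :=
      tsum_congr fun k ↦ ((hφ k).setIntegral_image_emb (hemb k) f s).symm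
    _ = ∫ y in ⋃ k, φ k '' s, f y ∂ν :=
      (integral_iUnion (fun k ↦ (hemb k).measurableSet_image.2 hs) hdisj hf).symm

end Tiling

section UnitCubes

open Set Function

theorem pairwise_disjoint_univ_pi {ι : Type*} {κ X : ι → Type*} {t : ∀ i, κ i → Set (X i)}
    (ht : ∀ i, Pairwise (Disjoint on t i)) :
    Pairwise (Disjoint on fun k : ∀ i, κ i ↦ univ.pi fun i ↦ t i (k i)) := by
  intro k l hkl
  obtain ⟨i, hi⟩ := Function.ne_iff.1 hkl
  exact disjoint_univ_pi.2 ⟨i, ht i hi⟩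

theorem image_const_add_univ_pi_Ico {ι R : Type*} [AddCommMonoid R] [PartialOrder R]
    [IsOrderedCancelAddMonoid R] [ExistsAddOfLE R] (v a b : ι → R) :
    (fun x ↦ v + x) '' (univ.pi fun i ↦ Ico (a i) (b i)) =
      univ.pi fun i ↦ Ico (v i + a i) (v i + b i) :=
  (piMap_image_univ_pi (fun i x ↦ v i + x) _).trans (by simp only [image_const_add_Ico])

variable {ι R : Type*} [Semiring R] [LinearOrder R] [IsStrictOrderedRing R]

theorem pairwise_disjoint_Ico_natCast :
    Pairwise (Disjoint on fun k : ℕ ↦ Ico (k : R) (k + 1)) := by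
  simpa only [Nat.succ_eq_succ, Nat.cast_succ] using
    (Nat.mono_cast (α := R)).pairwise_disjoint_on_Ico_succ

theorem iUnion_Ico_natCast [FloorSemiring R] : ⋃ k : ℕ, Ico (k : R) (k + 1) = Ici 0 := by
  ext x
  simp only [mem_iUnion, mem_Ici]
  constructor
  · rintro ⟨k, hk⟩
    exact k.cast_nonneg.trans hk.1
  · exact fun hx ↦ ⟨⌊x⌋₊, Nat.floor_le hx, Nat.lt_floor_add_one x⟩

variable [ExistsAddOfLE R]

theorem natCast_add_image_unitCube (m : ι → ℕ) :
    (fun x ↦ (fun i ↦ (m i : R)) + x) '' (univ.pi fun _ : ι ↦ Ico (0 : R) 1) =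
      univ.pi fun i ↦ Ico (m i : R) (m i + 1) := by
  simpa only [add_zero] using
    image_const_add_univ_pi_Ico (fun i ↦ (m i : R)) (fun _ ↦ 0) fun _ ↦ 1

theorem pairwise_disjoint_natCast_add_image_unitCube :
    Pairwise (Disjoint on fun m : ι → ℕ ↦
      (fun x ↦ (fun i ↦ (m i : R)) + x) '' (univ.pi fun _ : ι ↦ Ico (0 : R) 1)) := by
  simpa only [natCast_add_image_unitCube] using
    pairwise_disjoint_univ_pi fun _ : ι ↦ pairwise_disjoint_Ico_natCast (R := R)

theorem iUnion_natCast_add_image_unitCube [FloorSemiring R] :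
    ⋃ m : ι → ℕ, (fun x ↦ (fun i ↦ (m i : R)) + x) '' (univ.pi fun _ : ι ↦ Ico (0 : R) 1) =
      univ.pi fun _ ↦ Ici 0 := by
  simp only [natCast_add_image_unitCube]
  rw [iUnion_univ_pi fun (_ : ι) (k : ℕ) ↦ Ico (k : R) (k + 1)]
  simp only [iUnion_Ico_natCast]

end UnitCubes

section Raabe

open MeasureTheory Set

variable {ι : Type*} [Fintype ι]

theorem univ_pi_Icc_ae_eq_univ_pi_Ico (a b : ι → ℝ) :
    (univ.pi fun i ↦ Icc (a i) (b i)) =ᵐ[volume] univ.pi fun i ↦ Ico (a i) (b i) :=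
  Measure.pi_Ico_ae_eq_pi_Icc.symm

section Orthant

variable {E : Type*} [NormedAddCommGroup E] {f : (ι → ℝ) → E}

theorem integrableOn_unitCube_tsum_natCast_add [CompleteSpace E]
    (hf : IntegrableOn f (univ.pi fun _ ↦ Ici 0)) :
    IntegrableOn (fun t ↦ ∑' m : ι → ℕ, f ((fun i ↦ (m i : ℝ)) + t))
      (univ.pi fun _ ↦ Icc 0 1) := by
  rw [integrableOn_congr_set_ae (univ_pi_Icc_ae_eq_univ_pi_Ico _ _)]
  rw [← iUnion_natCast_add_image_unitCube] at hf
  exact integrableOn_tsum_comp_of_pairwise_disjoint_image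
    (fun _ ↦ measurePreserving_add_left _ _) (fun _ ↦ measurableEmbedding_addLeft _)
    (.univ_pi fun _ ↦ measurableSet_Ico) pairwise_disjoint_natCast_add_image_unitCube hf

theorem setIntegral_unitCube_tsum_natCast_add [NormedSpace ℝ E]
    (hf : IntegrableOn f (univ.pi fun _ ↦ Ici 0)) :
    ∫ t in univ.pi fun _ ↦ Icc 0 1, ∑' m : ι → ℕ, f ((fun i ↦ (m i : ℝ)) + t) =
      ∫ x in univ.pi fun _ ↦ Ici 0, f x := by
  rw [setIntegral_congr_set (univ_pi_Icc_ae_eq_univ_pi_Ico _ _)]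
  rw [← iUnion_natCast_add_image_unitCube] at hf ⊢
  exact setIntegral_tsum_comp_of_pairwise_disjoint_image
    (fun _ ↦ measurePreserving_add_left _ _) (fun _ ↦ measurableEmbedding_addLeft _)
    (.univ_pi fun _ ↦ measurableSet_Ico) pairwise_disjoint_natCast_add_image_unitCube hf

end Orthant

/-- The integrand `∏_i (∑_{j ∈ S i} x_j + α_i)^{-s_i}` of the integral function `Y`, whose values at
`m + t`, `m ∈ ℕ^ι`, are the terms of the shifted Hurwitz zeta function. The paper's nested sums
`x_1 + ⋯ + x_i` are the case `S i = Finset.Iic i`. -/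
noncomputable def hurwitzIntegrand (S : ι → Finset ι) (α : ι → ℝ) (s : ι → ℂ) (x : ι → ℝ) : ℂ :=
  ∏ i, (((∑ j ∈ S i, x j) + α i : ℝ) : ℂ) ^ (-(s i))

theorem measurable_hurwitzIntegrand (S : ι → Finset ι) (α : ι → ℝ) (s : ι → ℂ) :
    Measurable (hurwitzIntegrand S α s) := by
  unfold hurwitzIntegrand
  fun_prop

theorem norm_ofReal_cpow_neg_le_rpow_neg_re {a b : ℝ} {z : ℂ} (ha : 0 < a) (hab : a ≤ b)
    (hz : 0 ≤ z.re) : ‖(b : ℂ) ^ (-z)‖ ≤ a ^ (-z.re) := by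
  rw [Complex.norm_cpow_eq_rpow_re_of_pos (ha.trans_le hab), Complex.neg_re]
  exact Real.rpow_le_rpow_of_nonpos ha hab (neg_nonpos.2 hz)

variable {S : ι → Finset ι} {α : ι → ℝ} {s : ι → ℂ}

theorem norm_hurwitzIntegrand_le (hS : ∀ i, i ∈ S i) (hα : ∀ i, 0 < α i)
    (hs : ∀ i, 0 ≤ (s i).re) {x : ι → ℝ} (hx : ∀ i, 0 ≤ x i) :
    ‖hurwitzIntegrand S α s x‖ ≤ ∏ i, (x i + α i) ^ (-(s i).re) := by
  rw [hurwitzIntegrand, norm_prod]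
  refine Finset.prod_le_prod (fun _ _ ↦ norm_nonneg _) fun i _ ↦ ?_
  have hle_sum : x i ≤ ∑ j ∈ S i, x j := Finset.single_le_sum (fun j _ ↦ hx j) (hS i)
  exact norm_ofReal_cpow_neg_le_rpow_neg_re (add_pos_of_nonneg_of_pos (hx i) (hα i))
    (by gcongr) (hs i)

theorem integrableOn_prod_add_rpow_neg {σ : ι → ℝ} (hα : ∀ i, 0 < α i) (hσ : ∀ i, 1 < σ i) :
    IntegrableOn (fun x ↦ ∏ i, (x i + α i) ^ (-σ i)) (univ.pi fun _ ↦ Ici 0) := by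
  rw [IntegrableOn, volume_pi, Measure.restrict_pi_pi]
  refine Integrable.fintype_prod (f := fun i y ↦ (y + α i) ^ (-σ i)) fun i ↦ ?_
  exact integrableOn_Ici_iff_integrableOn_Ioi (by finiteness) |>.2
    (integrableOn_add_rpow_Ioi_of_lt (neg_lt_neg (hσ i)) (neg_lt_zero.2 (hα i)))

theorem integrableOn_hurwitzIntegrand (hS : ∀ i, i ∈ S i) (hα : ∀ i, 0 < α i)
    (hs : ∀ i, 1 < (s i).re) :
    IntegrableOn (hurwitzIntegrand S α s) (univ.pi fun _ ↦ Ici 0) := by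
  refine (integrableOn_prod_add_rpow_neg hα hs).mono'
    (measurable_hurwitzIntegrand S α s).aestronglyMeasurable ?_
  filter_upwards [ae_restrict_mem (MeasurableSet.univ_pi fun _ ↦ measurableSet_Ici)] with x hx
  exact norm_hurwitzIntegrand_le hS hα (fun i ↦ zero_le_one.trans (hs i).le)
    fun i ↦ hx i (mem_univ i)

theorem raabe_formula_general (hS : ∀ i, i ∈ S i) (hα : ∀ i, 0 < α i)
    (hs : ∀ i, 1 < (s i).re) :
    IntegrableOn (fun t ↦ ∑' m : ι → ℕ, hurwitzIntegrand S α s ((fun i ↦ (m i : ℝ)) + t))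
      (univ.pi fun _ ↦ Icc 0 1) ∧
    ∫ t in univ.pi fun _ ↦ Icc 0 1,
        ∑' m : ι → ℕ, hurwitzIntegrand S α s ((fun i ↦ (m i : ℝ)) + t) =
      ∫ x in univ.pi fun _ ↦ Ici 0, hurwitzIntegrand S α s x :=
  have hint := integrableOn_hurwitzIntegrand hS hα hs
  ⟨integrableOn_unitCube_tsum_natCast_add hint, setIntegral_unitCube_tsum_natCast_add hint⟩

end Raabe

/-- Raabe's formula in the convergent range: for `Re (s i) > 1` for all `i`,
`∫_{[0,1]^n} ζ_{n,t}(α; s) dt = Y_n(α; s)`, where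
`ζ_{n,t}(α; s) = Σ_{m ∈ ℕ^n} ∏_i ((m_1+t_1)+⋯+(m_i+t_i)+α_i)^{-s_i}` and
`Y_n(α; s) = ∫_{[0,∞)^n} ∏_i (x_1+⋯+x_i+α_i)^{-s_i} dx`; in particular
`t ↦ ζ_{n,t}(α; s)` is integrable on `[0,1]^n`. -/
theorem raabe_formula
    (n : ℕ) (hn : 1 ≤ n) (α : Fin n → ℝ) (hα : ∀ i, 0 < α i)
    (s : Fin n → ℂ) (hs : ∀ i, 1 < (s i).re) :
    MeasureTheory.IntegrableOn
      (fun t : Fin n → ℝ => ∑' m : Fin n → ℕ,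
        ∏ i : Fin n,
          (((∑ j ∈ Finset.Iic i, ((m j : ℝ) + t j)) + α i : ℝ) : ℂ) ^ (-(s i)))
      (Set.univ.pi fun _ : Fin n => Set.Icc (0 : ℝ) 1) ∧
    (∫ t in Set.univ.pi fun _ : Fin n => Set.Icc (0 : ℝ) 1,
        ∑' m : Fin n → ℕ,
          ∏ i : Fin n,
            (((∑ j ∈ Finset.Iic i, ((m j : ℝ) + t j)) + α i : ℝ) : ℂ) ^ (-(s i)))
      = ∫ x in Set.univ.pi fun _ : Fin n => Set.Ici (0 : ℝ),
          ∏ i : Fin n, (((∑ j ∈ Finset.Iic i, x j) + α i : ℝ) : ℂ) ^ (-(s i)) :=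
  raabe_formula_general (fun _ ↦ Finset.mem_Iic.2 le_rfl) hα hs
end
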